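/- Let W, V be abelian groups, (p_i, q_i) a Cl(r)-representation on V, and e : W → V, f : V → W additive maps with p_i ∘ e = 0 and f ∘ q_i = 0 for all i ∈ [r], f ∘ e = id_W, and e ∘ f = p_{[r]} ∘ q_{[r]}. Define p̃_i := q_i, q̃_i := p_i, ẽ := q_{[r]} ∘ e : W → V, and f̃ := f ∘ p_{[r]} : V → W. Then (p̃_i, q̃_i) is again a Cl(r)-representation on V, and the same relations hold for the new data: p̃_i ∘ ẽ = 0 and f̃ ∘ q̃_i = 0 for all i ∈ [r], f̃ ∘ ẽ = id_W, and ẽ ∘ f̃ = p̃_{[r]} ∘ q̃_{[r]} (where p̃_I and q̃_I are formed from p̃, q̃ by the same ordering conventions as p_I, q_I). -/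

import Mathlib

/-!
Statement 6: the dual data `p̃ᵢ := qᵢ`, `q̃ᵢ := pᵢ`, `ẽ := q_{[r]} ∘ e`, `f̃ := f ∘ p_{[r]}`
again forms a `Cl(r)`-representation together with maps satisfying the same relations.
-/

/-- The ordered product `q_I = q_{a_0} ∘ q_{a_1} ∘ ⋯ ∘ q_{a_k}` for `I = {a_0 < ⋯ < a_k}`. -/
def qProd {r : ℕ} {V : Type*} [AddCommGroup V] (q : Fin r → AddMonoid.End V)
    (I : Finset (Fin r)) : AddMonoid.End V :=
  ((I.sort (· ≤ ·)).map q).prod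

/-- The ordered product `p_I = p_{a_k} ∘ p_{a_{k-1}} ∘ ⋯ ∘ p_{a_0}` for `I = {a_0 < ⋯ < a_k}`. -/
def pProd {r : ℕ} {V : Type*} [AddCommGroup V] (p : Fin r → AddMonoid.End V)
    (I : Finset (Fin r)) : AddMonoid.End V :=
  ((I.sort (· ≤ ·)).reverse.map p).prod

/-- A `Cl(r)`-representation on an abelian group `V`. -/
def IsCliffordRep {r : ℕ} {V : Type*} [AddCommGroup V] (p q : Fin r → AddMonoid.End V) : Prop :=
  (∀ i, p i * p i = 0) ∧ (∀ i, q i * q i = 0) ∧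
    (∀ i j, p i * p j + p j * p i = 0) ∧
    (∀ i j, q i * q j + q j * q i = 0) ∧
    (∀ i j, p i * q j + q j * p i = if i = j then 1 else 0)

/-!
Write `P = p_{[r]}` and `Q = q_{[r]}`. The relations for `ẽ = Q e` and `f̃ = f P` reduce to
`f̃ ẽ = f (P Q) e = (f e) (f e)` and `ẽ f̃ = Q (e f) P = (Q P Q) P`, so two facts are needed.
First, `Q P Q = Q`: any `x` with `x qᵢ = 0` for all `i` satisfies `x pᵢ qᵢ = x`, and `x pᵢ` is still
killed by the remaining `qⱼ`, so the factors of `P Q` cancel in pairs from the middle outwards.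
Second, reversing the order of `k` anticommuting factors costs the sign `(-1) ^ (k choose 2)`; in
passing from `Q P` to `p̃_{[r]} q̃_{[r]}` this sign occurs twice.
-/

section Ring

variable {R : Type*} [Ring R]

/-- Two ring elements anticommute if `x * y = -(y * x)`; the form with a sum is the one in which
`IsCliffordRep` states its relations. -/
def Anticommute (x y : R) : Prop :=
  x * y + y * x = 0

namespace Anticommute

theorem eq_neg {x y : R} (h : Anticommute x y) : x * y = -(y * x) :=
  eq_neg_of_add_eq_zero_left h

theorem mul_list_prod {x : R} {l : List R} (h : ∀ y ∈ l, Anticommute x y) :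
    x * l.prod = (-1 : ℤˣ) ^ l.length • (l.prod * x) := by
  induction l with
  | nil => simp
  | cons y l ih =>
    obtain ⟨hy, hl⟩ := List.forall_mem_cons.1 h
    calc x * (y :: l).prod = -(y * (x * l.prod)) := by
          rw [List.prod_cons, ← mul_assoc, hy.eq_neg, neg_mul, mul_assoc]
      _ = (-1 : ℤˣ) ^ (y :: l).length • ((y :: l).prod * x) := by
          rw [ih hl, mul_smul_comm, List.length_cons, pow_succ', mul_smul, Units.neg_smul,
            one_smul, List.prod_cons, mul_assoc]

theorem mul_list_prod_eq_zero {x : R} {l : List R} (h : ∀ y ∈ l, Anticommute x y)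
    (hx : x * x = 0) (hxl : x ∈ l) : x * l.prod = 0 := by
  obtain ⟨s, t, rfl⟩ := List.append_of_mem hxl
  have hs : ∀ y ∈ s, Anticommute x y := fun y hy => h y (List.mem_append_left _ hy)
  rw [List.prod_append, List.prod_cons, ← mul_assoc, mul_list_prod hs, smul_mul_assoc,
    mul_assoc, ← mul_assoc x x, hx, zero_mul, mul_zero, smul_zero]

theorem list_prod_mul_eq_zero {x : R} {l : List R} (h : ∀ y ∈ l, Anticommute x y)
    (hx : x * x = 0) (hxl : x ∈ l) : l.prod * x = 0 := by
  rw [← smul_eq_zero_iff_eq ((-1 : ℤˣ) ^ l.length), ← mul_list_prod h]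
  exact mul_list_prod_eq_zero h hx hxl

theorem list_prod_reverse {l : List R} (h : l.Pairwise Anticommute) :
    l.reverse.prod = (-1 : ℤˣ) ^ l.length.choose 2 • l.prod := by
  induction l with
  | nil => simp
  | cons x l ih =>
    obtain ⟨hx, hl⟩ := List.pairwise_cons.1 h
    have choose_succ : (x :: l).length.choose 2 = l.length.choose 2 + l.length := by
      rw [List.length_cons, Nat.choose_succ_succ, Nat.choose_one_right, add_comm]
    have prod_mul : l.prod * x = (-1 : ℤˣ) ^ l.length • (x * l.prod) := by
      rw [mul_list_prod hx, smul_smul, Int.units_mul_self, one_smul]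
    rw [List.reverse_cons, List.prod_append, List.prod_singleton, ih hl, smul_mul_assoc,
      prod_mul, smul_smul, ← pow_add, choose_succ, List.prod_cons]

theorem list_prod_reverse_mul_list_prod {l m : List R} (hl : l.Pairwise Anticommute)
    (hm : m.Pairwise Anticommute) (hlm : l.length = m.length) :
    l.reverse.prod * m.prod = l.prod * m.reverse.prod := by
  rw [list_prod_reverse hl, list_prod_reverse hm, hlm, smul_mul_assoc, mul_smul_comm]

end Anticommute

theorem mul_prod_map_mul_prod_map_reverse {ι : Type*} {p q : ι → R} {l : List ι} {x : R}
    (hpq : ∀ i ∈ l, p i * q i + q i * p i = 1)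
    (hanti : l.Pairwise fun i j => Anticommute (p i) (q j)) (hx : ∀ i ∈ l, x * q i = 0) :
    x * ((l.map p).prod * (l.reverse.map q).prod) = x := by
  induction l generalizing x with
  | nil => simp
  | cons i l ih =>
    obtain ⟨hi, hl⟩ := List.forall_mem_cons.1 hpq
    obtain ⟨hanti_i, hanti_l⟩ := List.pairwise_cons.1 hanti
    obtain ⟨hxi, hxl⟩ := List.forall_mem_cons.1 hx
    have mul_p_mul_q : ∀ j ∈ l, x * p i * q j = 0 := fun j hj => by
      rw [mul_assoc, (hanti_i j hj).eq_neg, mul_neg, ← mul_assoc, hxl j hj, zero_mul, neg_zero]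
    calc x * (((i :: l).map p).prod * ((i :: l).reverse.map q).prod)
        = x * p i * ((l.map p).prod * (l.reverse.map q).prod) * q i := by
          simp [mul_assoc]
      _ = x * (p i * q i) := by rw [ih hl hanti_l mul_p_mul_q, mul_assoc]
      _ = x := by rw [eq_sub_of_add_eq hi, mul_sub, ← mul_assoc, hxi, zero_mul, mul_one, sub_zero]

end Ring

section Representation

variable {r : ℕ} {V : Type*} [AddCommGroup V]

namespace IsCliffordRep

variable {p q : Fin r → AddMonoid.End V} {I : Finset (Fin r)} {i : Fin r}

theorem swap (h : IsCliffordRep p q) : IsCliffordRep q p := by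
  obtain ⟨p_sq, q_sq, p_anti, q_anti, p_q⟩ := h
  refine ⟨q_sq, p_sq, q_anti, p_anti, fun i j => ?_⟩
  rw [add_comm, p_q]
  simp only [eq_comm]

theorem q_mul_self (h : IsCliffordRep p q) (i : Fin r) : q i * q i = 0 :=
  h.2.1 i

theorem anticommute_q (h : IsCliffordRep p q) (i j : Fin r) : Anticommute (q i) (q j) :=
  h.2.2.2.1 i j

theorem p_mul_q_add_q_mul_p (h : IsCliffordRep p q) (i : Fin r) : p i * q i + q i * p i = 1 :=
  (h.2.2.2.2 i i).trans (if_pos rfl)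

theorem anticommute_p_q (h : IsCliffordRep p q) {i j : Fin r} (hij : i ≠ j) :
    Anticommute (p i) (q j) :=
  (h.2.2.2.2 i j).trans (if_neg hij)

theorem q_mul_qProd (h : IsCliffordRep p q) (hi : i ∈ I) : q i * qProd q I = 0 :=
  Anticommute.mul_list_prod_eq_zero (List.forall_mem_map.2 fun j _ => h.anticommute_q i j)
    (h.q_mul_self i) (List.mem_map_of_mem ((Finset.mem_sort _).2 hi))

theorem qProd_mul_q (h : IsCliffordRep p q) (hi : i ∈ I) : qProd q I * q i = 0 :=
  Anticommute.list_prod_mul_eq_zero (List.forall_mem_map.2 fun j _ => h.anticommute_q i j)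
    (h.q_mul_self i) (List.mem_map_of_mem ((Finset.mem_sort _).2 hi))

theorem pProd_mul_p (h : IsCliffordRep p q) (hi : i ∈ I) : pProd p I * p i = 0 :=
  Anticommute.list_prod_mul_eq_zero (List.forall_mem_map.2 fun j _ => h.swap.anticommute_q i j)
    (h.swap.q_mul_self i) (List.mem_map_of_mem (by simpa using hi))

theorem mul_pProd_mul_qProd (h : IsCliffordRep p q) {x : AddMonoid.End V}
    (hx : ∀ i ∈ I, x * q i = 0) : x * (pProd p I * qProd q I) = x := by
  have nodup : (I.sort (· ≤ ·)).reverse.Nodup := List.nodup_reverse.2 (I.sort_nodup _)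
  have cancel := mul_prod_map_mul_prod_map_reverse (l := (I.sort (· ≤ ·)).reverse) (x := x)
    (fun i _ => h.p_mul_q_add_q_mul_p i) (nodup.imp h.anticommute_p_q)
    (fun i hi => hx i (by simpa using hi))
  rwa [List.reverse_reverse] at cancel

theorem qProd_mul_pProd_mul_qProd (h : IsCliffordRep p q) (I : Finset (Fin r)) :
    qProd q I * pProd p I * qProd q I = qProd q I := by
  rw [mul_assoc]
  exact h.mul_pProd_mul_qProd fun _ hi => h.qProd_mul_q hi

theorem pairwise_anticommute_map_q (h : IsCliffordRep p q) (l : List (Fin r)) :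
    (l.map q).Pairwise Anticommute :=
  List.pairwise_map.2 (List.pairwise_of_forall h.anticommute_q)

theorem pProd_mul_qProd_swap (h : IsCliffordRep p q) (I : Finset (Fin r)) :
    pProd q I * qProd p I = qProd q I * pProd p I := by
  simp only [pProd, qProd, List.map_reverse]
  exact Anticommute.list_prod_reverse_mul_list_prod (h.pairwise_anticommute_map_q _)
    (h.swap.pairwise_anticommute_map_q _) (by simp only [List.length_map])

end IsCliffordRep

end Representation

theorem stmt_6 {r : ℕ} (hr : 0 < r) {W V : Type} [AddCommGroup W] [AddCommGroup V]
    (p q : Fin r → AddMonoid.End V) (hpq : IsCliffordRep p q)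
    (e : W →+ V) (f : V →+ W)
    (hpe : ∀ i : Fin r, (p i).comp e = 0)
    (hfq : ∀ i : Fin r, f.comp (q i) = 0)
    (hfe : f.comp e = AddMonoidHom.id W)
    (hef : e.comp f = (pProd p Finset.univ).comp (qProd q Finset.univ)) :
    -- the dual data: `p̃ᵢ := qᵢ`, `q̃ᵢ := pᵢ`, `ẽ := q_{[r]} ∘ e`, `f̃ := f ∘ p_{[r]}`
    IsCliffordRep q p ∧
      (∀ i : Fin r, (q i).comp ((qProd q Finset.univ).comp e) = 0) ∧
      (∀ i : Fin r, (f.comp (pProd p Finset.univ)).comp (p i) = 0) ∧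
      (f.comp (pProd p Finset.univ)).comp ((qProd q Finset.univ).comp e) =
        AddMonoidHom.id W ∧
      ((qProd q Finset.univ).comp e).comp (f.comp (pProd p Finset.univ)) =
        (pProd q Finset.univ).comp (qProd p Finset.univ) := by
  refine ⟨hpq.swap, fun i => ?_, fun i => ?_, ?_, ?_⟩
  · exact congrArg (AddMonoidHom.comp · e) (hpq.q_mul_qProd (Finset.mem_univ i))
  · exact (congrArg f.comp (hpq.pProd_mul_p (Finset.mem_univ i))).trans f.comp_zero
  · calc (f.comp (pProd p Finset.univ)).comp ((qProd q Finset.univ).comp e)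
        = f.comp (((pProd p Finset.univ).comp (qProd q Finset.univ)).comp e) := rfl
      _ = (f.comp e).comp (f.comp e) := by rw [← hef]; rfl
      _ = AddMonoidHom.id W := by rw [hfe, AddMonoidHom.id_comp]
  · calc ((qProd q Finset.univ).comp e).comp (f.comp (pProd p Finset.univ))
        = (qProd q Finset.univ).comp ((e.comp f).comp (pProd p Finset.univ)) := rfl
      _ = (qProd q Finset.univ * pProd p Finset.univ * qProd q Finset.univ).comp
          (pProd p Finset.univ) := by rw [hef]; rfl
      _ = (qProd q Finset.univ).comp (pProd p Finset.univ) := by rw [hpq.qProd_mul_pProd_mul_qProd]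
      _ = (pProd q Finset.univ).comp (qProd p Finset.univ) :=
          (hpq.pProd_mul_qProd_swap Finset.univ).symm
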